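/- For every n ≥ 1, the unimodal spi-logic axiomatised by {e_funⁿ} is complete: for every sp-implication ι, {e_funⁿ} ⊨_Kr ι if and only if {e_funⁿ} ⊨_SLO ι. -/

import Mathlib

/-- Strictly positive modal formulas over a signature `Sig`:
propositional variables, `⊤`, conjunction, and a diamond `◇_r` for each `r : Sig`. -/
inductive SP (Sig : Type) : Type
  | var : ℕ → SP Sig
  | top : SP Sig
  | and : SP Sig → SP Sig → SP Sig
  | dia : Sig → SP Sig → SP Sig

/-- An sp-implication `σ → τ` is a pair of sp-formulas. -/
abbrev SPImp (Sig : Type) := SP Sig × SP Sig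

/-- A SLO of signature `Sig`: a meet-semilattice with a greatest element,
equipped with a monotone unary operator for each element of the signature. -/
structure SLO (Sig : Type) where
  carrier : Type
  [instInf : SemilatticeInf carrier]
  [instTop : OrderTop carrier]
  dia : Sig → carrier → carrier
  mono : ∀ r : Sig, Monotone (dia r)

attribute [instance] SLO.instInf SLO.instTop

namespace SLO

variable {Sig : Type}

/-- Evaluation of an sp-formula in a SLO under a valuation of the variables. -/
def eval (A : SLO Sig) (v : ℕ → A.carrier) : SP Sig → A.carrier
  | .var n => v n
  | .top => ⊤
  | .and φ ψ => eval A v φ ⊓ eval A v ψ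
  | .dia r φ => A.dia r (eval A v φ)

/-- A SLO validates an sp-implication `σ → τ` if under every valuation
the value of `σ` is below the value of `τ`. -/
def Valid (A : SLO Sig) (ι : SPImp Sig) : Prop :=
  ∀ v : ℕ → A.carrier, eval A v ι.1 ≤ eval A v ι.2

/-- A SLO validates a set of sp-implications. -/
def ValidSet (A : SLO Sig) (Ax : Set (SPImp Sig)) : Prop :=
  ∀ ι ∈ Ax, Valid A ι

end SLO

/-- A Kripke frame: a nonempty type of worlds with a binary accessibility
relation for each element of the signature. -/
structure KFrame (Sig : Type) where
  world : Type
  [instNonempty : Nonempty world]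
  rel : Sig → world → world → Prop

attribute [instance] KFrame.instNonempty

namespace KFrame

variable {Sig : Type}

/-- Truth of an sp-formula at a world of a Kripke model `(F, v)`. -/
def truth (F : KFrame Sig) (v : ℕ → Set F.world) : SP Sig → F.world → Prop
  | .var n, w => w ∈ v n
  | .top, _ => True
  | .and φ ψ, w => truth F v φ w ∧ truth F v ψ w
  | .dia r φ, w => ∃ u, F.rel r w u ∧ truth F v φ u

/-- A frame validates an sp-implication `σ → τ` if in every Kripke model on it,
at every world, truth of `σ` implies truth of `τ`. -/
def Valid (F : KFrame Sig) (ι : SPImp Sig) : Prop :=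
  ∀ (v : ℕ → Set F.world) (w : F.world), truth F v ι.1 w → truth F v ι.2 w

/-- A frame validates a set of sp-implications. -/
def ValidSet (F : KFrame Sig) (Ax : Set (SPImp Sig)) : Prop :=
  ∀ ι ∈ Ax, Valid F ι

/-- The complex algebra `F*` of a frame, as a SLO: all subsets of the worlds,
with intersection as meet, the whole set as `⊤`, and
`◇_r X = {w | ∃ u ∈ X, rel r w u}`. -/
def cmpl (F : KFrame Sig) : SLO Sig where
  carrier := Set F.world
  dia r X := {w | ∃ u ∈ X, F.rel r w u}
  mono r := by
    intro X Y hXY w hw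
    obtain ⟨u, hu, hr⟩ := hw
    exact ⟨u, hXY hu, hr⟩

end KFrame

/-- An sp-embedding between SLOs: an injective map preserving `⊤`,
binary meets, and each operator. -/
def IsSpEmbedding {Sig : Type} (A B : SLO Sig) (η : A.carrier → B.carrier) : Prop :=
  Function.Injective η ∧ η ⊤ = ⊤ ∧
    (∀ a b : A.carrier, η (a ⊓ b) = η a ⊓ η b) ∧
    ∀ (r : Sig) (a : A.carrier), η (A.dia r a) = B.dia r (η a)

/-- `Ax ⊨_Kr ι`: every frame validating every member of `Ax` validates `ι`. -/
def KrCons {Sig : Type} (Ax : Set (SPImp Sig)) (ι : SPImp Sig) : Prop :=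
  ∀ F : KFrame Sig, F.ValidSet Ax → F.Valid ι

/-- `Ax ⊨_SLO ι`: every SLO validating every member of `Ax` validates `ι`. -/
def SLOCons {Sig : Type} (Ax : Set (SPImp Sig)) (ι : SPImp Sig) : Prop :=
  ∀ A : SLO Sig, A.ValidSet Ax → A.Valid ι

/-- The spi-logic axiomatised by `Ax` is complete:
`Ax ⊨_Kr ι` iff `Ax ⊨_SLO ι` for every sp-implication `ι`. -/
def IsCompleteLogic {Sig : Type} (Ax : Set (SPImp Sig)) : Prop :=
  ∀ ι : SPImp Sig, KrCons Ax ι ↔ SLOCons Ax ι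

/-- The spi-logic axiomatised by `Ax` is complex: every SLO validating every
member of `Ax` sp-embeds into the complex algebra of some frame validating
every member of `Ax`. -/
def IsComplexLogic {Sig : Type} (Ax : Set (SPImp Sig)) : Prop :=
  ∀ A : SLO Sig, A.ValidSet Ax →
    ∃ F : KFrame Sig, F.ValidSet Ax ∧
      ∃ η : A.carrier → (KFrame.cmpl F).carrier, IsSpEmbedding A (KFrame.cmpl F) η

/-- The unimodal diamond. -/
def SP.d (φ : SP Unit) : SP Unit := SP.dia () φ

/-- `p → ◇p` (reflexivity). -/
def e_refl : SPImp Unit := (SP.var 0, (SP.var 0).d)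

/-- `◇◇p → ◇p` (transitivity). -/
def e_trans : SPImp Unit := (((SP.var 0).d).d, (SP.var 0).d)

/-- `q ∧ ◇p → ◇(p ∧ ◇q)` (symmetry). -/
def e_sym : SPImp Unit :=
  ((SP.var 1).and ((SP.var 0).d), ((SP.var 0).and ((SP.var 1).d)).d)

/-- Conjunction of a list of variables (with a final `⊤`). -/
def conjVarsList : List ℕ → SP Unit
  | [] => SP.top
  | n :: L => (SP.var n).and (conjVarsList L)

/-- The conjunction `⋀ Q` of a finite set of variables. -/
def conjVars (Q : Finset ℕ) : SP Unit := conjVarsList (Q.sort (· ≤ ·))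

/-- Conjunction of a list of sp-formulas (with a final `⊤`). -/
def conjSP : List (SP Unit) → SP Unit
  | [] => SP.top
  | φ :: L => φ.and (conjSP L)

/-- `e_funⁿ`: the sp-implication
`⋀_{Q ⊆ {p₀,…,pₙ}, |Q| = n} ◇(⋀ Q) → ◇(p₀ ∧ ⋯ ∧ pₙ)`. -/
noncomputable def eFun (n : ℕ) : SPImp Unit :=
  (conjSP ((((Finset.range (n + 1)).powersetCard n).toList).map fun Q => (conjVars Q).d),
   (conjVars (Finset.range (n + 1))).d)

/-!
Say that a formula is prime if it is a variable or has the form `◇(π₁ ∧ ⋯ ∧ π_r)` with `r ≤ n`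
and all `πᵢ` prime. Two facts about prime formulas give completeness.

* In a SLO validating `e_funⁿ`, a diamond of a finite meet is the meet of the diamonds of its
  submeets of size at most `n`. Pushing diamonds inwards in this way turns every sp-formula into a
  finite meet of prime formulas.
* A prime formula `π` is refuted at a point of a model in which every point has at most `n`
  successors, so that the frame validates `e_funⁿ`, and this point refutes only those formulas that
  lie below `π` in every SLO.

If `σ → τ` is a Kripke consequence of `e_funⁿ` and `π` is a prime conjunct of `τ`, then the point
belonging to `π` refutes `τ`, hence refutes `σ`, and so `σ ≤ π` holds in every SLO.
-/

open Finset

theorem mem_powersetCard_iff_exists_erase {α : Type*} [DecidableEq α] {n : ℕ} {s t : Finset α}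
    (hs : #s = n + 1) : t ∈ s.powersetCard n ↔ ∃ a ∈ s, s.erase a = t := by
  rw [mem_powersetCard, ← covBy_iff_exists_erase, covBy_iff_card_sdiff_eq_one]
  refine and_congr_right fun hts => ?_
  rw [card_sdiff_of_subset hts]
  omega

namespace SLO

variable {A : SLO Unit} {v : ℕ → A.carrier} {n : ℕ}

theorem le_eval_conjSP {a : A.carrier} {L : List (SP Unit)} :
    a ≤ A.eval v (conjSP L) ↔ ∀ φ ∈ L, a ≤ A.eval v φ := by
  induction L with
  | nil => simp [conjSP, eval]
  | cons φ L ih => simp [conjSP, eval, ih]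

theorem eval_conjVars (Q : Finset ℕ) : A.eval v (conjVars Q) = Q.inf v := by
  have eval_list (L : List ℕ) : A.eval v (conjVarsList L) = L.toFinset.inf v := by
    induction L with
    | nil => rfl
    | cons i L ih => simp [conjVarsList, eval, ih]
  rw [conjVars, eval_list, sort_toFinset]

theorem le_eval_eFun_fst {a : A.carrier} :
    a ≤ A.eval v (eFun n).1 ↔
      ∀ i ∈ range (n + 1), a ≤ A.dia () (((range (n + 1)).erase i).inf v) := by
  simp [eFun, le_eval_conjSP, mem_powersetCard_iff_exists_erase (card_range (n + 1)), SP.d, eval,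
    eval_conjVars]

theorem le_dia_inf_of_forall_erase {α : Type*} [DecidableEq α] (hA : A.Valid (eFun n))
    {s : Finset α} (hs : #s = n + 1) {f : α → A.carrier} {a : A.carrier}
    (ha : ∀ x ∈ s, a ≤ A.dia () ((s.erase x).inf f)) : a ≤ A.dia () (s.inf f) := by
  have hs_nonempty : s.Nonempty := card_pos.1 (by omega)
  have : Nonempty α := hs_nonempty.to_type
  obtain ⟨g, g_mem, g_injOn, g_surjOn⟩ : ∃ g : ℕ → α, Set.BijOn g (range (n + 1)) s :=
    (finite_toSet _).exists_bijOn_of_encard_eq <| by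
      rw [Set.encard_coe_eq_coe_finsetCard, Set.encard_coe_eq_coe_finsetCard, card_range, hs]
  have erase_inf_le : ∀ i ∈ range (n + 1),
      (s.erase (g i)).inf f ≤ ((range (n + 1)).erase i).inf (f ∘ g) := by
    refine fun i hi => Finset.le_inf fun j hj => ?_
    obtain ⟨hji, hj⟩ := mem_erase.1 hj
    exact inf_le (mem_erase.2 ⟨g_injOn.ne hj hi hji, g_mem hj⟩)
  have inf_comp_le : (range (n + 1)).inf (f ∘ g) ≤ s.inf f := by
    refine Finset.le_inf fun x hx => ?_
    obtain ⟨i, hi, rfl⟩ := g_surjOn hx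
    exact inf_le (f := f ∘ g) hi
  calc a ≤ A.eval (f ∘ g) (eFun n).1 :=
        le_eval_eFun_fst.2 fun i hi => (ha (g i) (g_mem hi)).trans (A.mono () (erase_inf_le i hi))
    _ ≤ A.eval (f ∘ g) (eFun n).2 := hA (f ∘ g)
    _ = A.dia () ((range (n + 1)).inf (f ∘ g)) := congrArg (A.dia ()) (eval_conjVars _)
    _ ≤ A.dia () (s.inf f) := A.mono () inf_comp_le

theorem dia_inf_eq_inf_powerset_card_le {α : Type*} (hA : A.Valid (eFun n)) (K : Finset α)
    (f : α → A.carrier) :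
    A.dia () (K.inf f) =
      ({L ∈ K.powerset | #L ≤ n} : Finset _).inf fun L => A.dia () (L.inf f) := by
  classical
  refine le_antisymm (Finset.le_inf fun L hL => ?_) ?_
  · exact A.mono () (inf_mono (mem_powerset.1 (mem_filter.1 hL).1))
  induction K using Finset.strongInduction with
  | H K ih =>
    obtain hK | hK := le_or_gt #K n
    · exact inf_le (f := fun L : Finset α => A.dia () (L.inf f)) (by simp [hK])
    obtain ⟨T, hTK, hT⟩ := exists_subset_card_eq (Nat.succ_le_of_lt hK)
    have hT_nonempty : T.Nonempty := card_pos.1 (by omega)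
    -- Adding all of `K \ T` to each element of `T` leaves `n + 1` values to which `e_funⁿ` applies.
    have inf_T : (T.inf fun x => f x ⊓ (K \ T).inf f) = K.inf f :=
      calc (T.inf fun x => f x ⊓ (K \ T).inf f)
        _ = T.inf f ⊓ T.inf fun _ => (K \ T).inf f := Finset.inf_inf
        _ = T.inf f ⊓ (K \ T).inf f := by rw [inf_const hT_nonempty]
        _ = K.inf f := by rw [← inf_union, union_sdiff_of_subset hTK]
    rw [← inf_T]
    refine le_dia_inf_of_forall_erase hA hT fun x hx => ?_
    calc ({L ∈ K.powerset | #L ≤ n} : Finset _).inf (fun L => A.dia () (L.inf f))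
      _ ≤ ({L ∈ (K.erase x).powerset | #L ≤ n} : Finset _).inf (fun L => A.dia () (L.inf f)) :=
        inf_mono (filter_subset_filter _ (powerset_mono.2 (erase_subset x K)))
      _ ≤ A.dia () ((K.erase x).inf f) := ih _ (erase_ssubset (hTK hx))
      _ ≤ A.dia () ((T.erase x).inf fun y => f y ⊓ (K \ T).inf f) := by
        refine A.mono () (Finset.le_inf fun y hy => le_inf ?_ ?_)
        · exact inf_le (erase_subset_erase x hTK hy)
        · exact inf_mono (subset_erase.2 ⟨sdiff_subset, fun h => (mem_sdiff.1 h).2 hx⟩)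

end SLO

namespace KFrame

section Semantics

variable {Sig : Type} {F : KFrame Sig}

theorem eval_cmpl (v : ℕ → Set F.world) (φ : SP Sig) :
    F.cmpl.eval v φ = {w : F.world | F.truth v φ w} := by
  induction φ with
  | var x => rfl
  | top => rfl
  | and φ ψ ihφ ihψ => exact congrArg₂ (fun X Y : Set F.world => X ∩ Y) ihφ ihψ
  | dia r φ ih =>
    exact (congrArg (F.cmpl.dia r) ih).trans (Set.ext fun w => exists_congr fun u => and_comm)

theorem valid_cmpl {ι : SPImp Sig} : F.cmpl.Valid ι ↔ F.Valid ι :=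
  forall_congr' fun v => iff_of_eq <|
    congrArg₂ (fun X Y : Set F.world => X ⊆ Y) (eval_cmpl v ι.1) (eval_cmpl v ι.2)

end Semantics

variable {F : KFrame Unit} {v : ℕ → Set F.world} {w : F.world} {n : ℕ}

theorem truth_conjSP {L : List (SP Unit)} :
    F.truth v (conjSP L) w ↔ ∀ φ ∈ L, F.truth v φ w := by
  induction L with
  | nil => simp [conjSP, truth]
  | cons φ L ih => simp [conjSP, truth, ih]

theorem truth_conjVars {Q : Finset ℕ} : F.truth v (conjVars Q) w ↔ ∀ i ∈ Q, w ∈ v i := by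
  have truth_list (L : List ℕ) : F.truth v (conjVarsList L) w ↔ ∀ i ∈ L, w ∈ v i := by
    induction L with
    | nil => simp [conjVarsList, truth]
    | cons i L ih => simp [conjVarsList, truth, ih]
  simp [conjVars, truth_list]

theorem truth_eFun_fst :
    F.truth v (eFun n).1 w ↔
      ∀ i ∈ range (n + 1), ∃ u, F.rel () w u ∧ ∀ j ∈ (range (n + 1)).erase i, u ∈ v j := by
  simp [eFun, truth_conjSP, mem_powersetCard_iff_exists_erase (card_range (n + 1)), SP.d, truth,
    truth_conjVars]

theorem valid_eFun_of_encard_le (hF : ∀ w, {u | F.rel () w u}.encard ≤ n) :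
    F.Valid (eFun n) := by
  intro v w hw
  choose! u hwu hu using truth_eFun_fst.1 hw
  have hcard : {u | F.rel () w u}.encard < (range (n + 1) : Set ℕ).encard := by
    rw [Set.encard_coe_eq_coe_finsetCard, card_range]
    exact (hF w).trans_lt (by exact_mod_cast n.lt_succ_self)
  obtain ⟨i, hi, j, hj, hij, huij⟩ := Set.exists_ne_map_eq_of_encard_lt_of_maps_to hcard hwu
  refine ⟨u i, hwu i hi, truth_conjVars.2 fun k hk => ?_⟩
  obtain rfl | hki := eq_or_ne k i
  · exact huij ▸ hu j hj k (mem_erase.2 ⟨hij, hk⟩)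
  · exact hu i hi k (mem_erase.2 ⟨hki, hk⟩)

end KFrame

/-- Prime formulas of width at most `n`: variables, and diamonds of conjunctions of at most `n`
prime formulas. Modulo `e_funⁿ`, every sp-formula is a finite conjunction of these. The conjuncts
below a diamond are listed as a tuple, to avoid a nested inductive type. -/
inductive PrimeTree (n : ℕ) : Type
  | var : ℕ → PrimeTree n
  | node : (r : ℕ) → r ≤ n → (Fin r → PrimeTree n) → PrimeTree n

namespace PrimeTree

variable {n : ℕ}

instance : Nonempty (PrimeTree n) := ⟨var 0⟩

/-- The sp-formula represented by a prime tree. -/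
def form : PrimeTree n → SP Unit
  | var x => .var x
  | node _ _ f => (conjSP (List.ofFn fun i => (f i).form)).d

theorem exists_eval_form_eq_dia_inf {L : Finset (PrimeTree n)} (hL : #L ≤ n) :
    ∃ t : PrimeTree n, ∀ (A : SLO Unit) (v : ℕ → A.carrier),
      A.eval v t.form = A.dia () (L.inf fun s => A.eval v s.form) := by
  refine ⟨node #L hL fun i => L.equivFin.symm i, fun A v => congrArg (A.dia ()) ?_⟩
  refine eq_of_forall_le_iff fun a => ?_
  simp [SLO.le_eval_conjSP, L.equivFin.symm.forall_congr_left]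

theorem exists_eval_eq_inf_form (n : ℕ) (φ : SP Unit) :
    ∃ K : Finset (PrimeTree n), ∀ A : SLO Unit, A.Valid (eFun n) → ∀ v : ℕ → A.carrier,
      A.eval v φ = K.inf fun t => A.eval v t.form := by
  classical
  induction φ with
  | var x => exact ⟨{var x}, fun A _ v => by simp [form]⟩
  | top => exact ⟨∅, fun A _ v => by simp [SLO.eval]⟩
  | and φ ψ ihφ ihψ =>
    obtain ⟨K, hK⟩ := ihφ
    obtain ⟨L, hL⟩ := ihψ
    exact ⟨K ∪ L, fun A hA v => by rw [SLO.eval, hK A hA v, hL A hA v, inf_union]⟩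
  | dia r φ ih =>
    obtain ⟨K, hK⟩ := ih
    choose! diaInf eval_diaInf using
      fun L : Finset (PrimeTree n) => exists_eval_form_eq_dia_inf (L := L)
    refine ⟨{L ∈ K.powerset | #L ≤ n}.image diaInf, fun A hA v => ?_⟩
    rw [SLO.eval, hK A hA v, SLO.dia_inf_eq_inf_powerset_card_le hA, inf_image]
    exact inf_congr rfl fun L hL => (eval_diaInf L (mem_filter.1 hL).2 A v).symm

/-- The frame of all prime trees, where a node sees its children, with an extra point `none`. Under
`PrimeTree.val` all formulas are true at `none`, hence all diamonds are true at `var x`, whose only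
successor is `none`; and the tree `t` refutes its own formula. -/
def frame (n : ℕ) : KFrame Unit where
  world := Option (PrimeTree n)
  rel _
    | some (node _ _ f), u => ∃ i, u = some (f i)
    | _, u => u = none

/-- The valuation on `PrimeTree.frame n` in which each variable fails exactly at its own tree. -/
def val (x : ℕ) : Set (frame n).world := {w | w ≠ some (var x)}

theorem frame_valid_eFun (hn : 1 ≤ n) : (frame n).Valid (eFun n) := by
  refine KFrame.valid_eFun_of_encard_le fun w => ?_
  match w with
  | none | some (var _) => exact (Set.encard_singleton _).trans_le (by exact_mod_cast hn)
  | some (node r hr f) =>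
    calc {u | ∃ i, u = some (f i)}.encard
      _ = ((fun i => some (f i)) '' Set.univ).encard := by
        simp only [Set.image_univ, Set.range, eq_comm]
      _ ≤ (Set.univ : Set (Fin r)).encard := Set.encard_image_le _ _
      _ ≤ n := by simpa using hr

theorem truth_val_none (φ : SP Unit) : (frame n).truth val φ none := by
  induction φ with
  | var x => exact Option.some_ne_none _ |>.symm
  | top => trivial
  | and φ ψ ihφ ihψ => exact ⟨ihφ, ihψ⟩
  | dia r φ ih => exact ⟨none, rfl, ih⟩

theorem not_truth_val_form (t : PrimeTree n) : ¬ (frame n).truth val t.form (some t) := by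
  induction t with
  | var x => exact fun h => h rfl
  | node r hr f ih =>
    rintro ⟨_, ⟨i, rfl⟩, h⟩
    exact ih i (KFrame.truth_conjSP.1 h _ (List.mem_ofFn.2 ⟨i, rfl⟩))

theorem eval_le_eval_form_of_not_truth (A : SLO Unit) (v : ℕ → A.carrier) {φ : SP Unit}
    {t : PrimeTree n} (h : ¬ (frame n).truth val φ (some t)) : A.eval v φ ≤ A.eval v t.form := by
  induction φ generalizing t with
  | var x =>
    obtain rfl : t = var x := Option.some.inj (not_not.1 h)
    exact le_rfl
  | top => exact absurd trivial h
  | and φ ψ ihφ ihψ =>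
    obtain hφ | hψ := not_and_or.1 h
    · exact inf_le_left.trans (ihφ hφ)
    · exact inf_le_right.trans (ihψ hψ)
  | dia r φ ih =>
    cases t with
    | var x => exact absurd ⟨none, rfl, truth_val_none φ⟩ h
    | node r hr f =>
      refine A.mono () (SLO.le_eval_conjSP.2 <| List.forall_mem_ofFn_iff.2 fun i => ih ?_)
      exact fun hi => h ⟨some (f i), ⟨i, rfl⟩, hi⟩

end PrimeTree

theorem krCons_of_sloCons {Sig : Type} {Ax : Set (SPImp Sig)} {ι : SPImp Sig}
    (h : SLOCons Ax ι) : KrCons Ax ι :=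
  fun F hF => KFrame.valid_cmpl.1 (h F.cmpl fun κ hκ => KFrame.valid_cmpl.2 (hF κ hκ))

/-- For every `n ≥ 1`, the unimodal spi-logic axiomatised by
`{e_funⁿ}` is complete: `{e_funⁿ} ⊨_Kr ι` iff `{e_funⁿ} ⊨_SLO ι` for every
sp-implication `ι`. -/
theorem stmt14 (n : ℕ) (hn : 1 ≤ n) :
    IsCompleteLogic ({eFun n} : Set (SPImp Unit)) := by
  refine fun ι => ⟨fun hι A hA v => ?_, krCons_of_sloCons⟩
  obtain ⟨K, hK⟩ := PrimeTree.exists_eval_eq_inf_form n ι.2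
  rw [hK A (hA _ rfl) v]
  refine Finset.le_inf fun t ht => PrimeTree.eval_le_eval_form_of_not_truth A v fun hσ => ?_
  have hF : (PrimeTree.frame n).ValidSet {eFun n} := by
    rintro _ rfl
    exact PrimeTree.frame_valid_eFun hn
  have hτt : SLOCons {eFun n} (ι.2, t.form) :=
    fun B hB u => (hK B (hB _ rfl) u).trans_le (Finset.inf_le ht)
  have hτ : (PrimeTree.frame n).truth PrimeTree.val ι.2 (some t) := hι _ hF _ _ hσ
  exact t.not_truth_val_form (krCons_of_sloCons hτt _ hF _ _ hτ)
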